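/- Let r ≥ 1 be an integer and m_1, …, m_r positive integers with s = m_1 + ⋯ + m_r. Then the multinomial coefficient s!/(m_1!⋯m_r!) equals the sum, over all ordered bipartitions (B_1, B_2) of {1, …, r} with 1 ∈ B_1 and B_2 = {1,…,r} \ B_1, of the product binom(s − r + 1, S(B_2) − |B_2|) · C(B_1) · C(B_2). -/

import Mathlib

theorem asc_left (n k : ℕ) : n.ascFactorial (k + 1) = n * (n + 1).ascFactorial k := by
  rw [Nat.ascFactorial_succ]
  exact (Nat.succ_ascFactorial n k).symm

open Finset in
theorem G_diff (c : ℕ → ℕ) (T : Finset ℕ) (y : ℕ) :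
    ((y + 1 + ∑ i ∈ T, c i) + 1).ascFactorial T.card =
      ((y + ∑ i ∈ T, c i) + 1).ascFactorial T.card +
      ∑ i ∈ T, ((y + 1 + c i + ∑ j ∈ T.erase i, c j) + 1).ascFactorial (T.erase i).card := by
  have h : ∀ i ∈ T, ((y + 1 + c i + ∑ j ∈ T.erase i, c j) + 1).ascFactorial (T.erase i).card
      = ((y + 1 + ∑ j ∈ T, c j) + 1).ascFactorial (T.card - 1) := by
    intro i hi
    rw [card_erase_of_mem hi, ← add_sum_erase T c hi, ← add_assoc]
  rw [sum_congr rfl h, sum_const, smul_eq_mul]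
  generalize ∑ i ∈ T, c i = k
  rcases T.card with _ | n
  · simp
  · rw [Nat.add_sub_cancel, Nat.ascFactorial_succ, asc_left,
      show y + k + 1 + 1 = y + 1 + k + 1 by ring]
    ring

/-- The Abel-type factor. -/
def abelF (c : ℕ → ℕ) (T : Finset ℕ) (x : ℕ) : ℕ :=
  if T.card = 0 then 1 else x * ((x + ∑ i ∈ T, c i) + 1).ascFactorial (T.card - 1)

open Finset in
theorem F_diff (c : ℕ → ℕ) (T : Finset ℕ) (x : ℕ) :
    abelF c T (x + 1) = abelF c T x + ∑ i ∈ T, abelF c (T.erase i) (x + 1 + c i) := by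
  rcases hn : T.card with _ | _ | n
  · have : T = ∅ := card_eq_zero.mp hn
    subst this
    simp [abelF]
  · obtain ⟨a, rfl⟩ := card_eq_one.mp hn
    simp [abelF]
  · have h : ∀ i ∈ T, abelF c (T.erase i) (x + 1 + c i)
      = (x + 1 + c i) * ((x + 1 + ∑ j ∈ T, c j) + 1).ascFactorial n := by
      intro i hi
      rw [abelF, card_erase_of_mem hi, hn, ← add_sum_erase T c hi, ← add_assoc]
      simp
    rw [sum_congr rfl h, ← sum_mul, sum_add_distrib, sum_const, smul_eq_mul, hn]
    simp only [abelF, hn]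
    generalize ∑ i ∈ T, c i = k
    simp only [Nat.add_sub_cancel, Nat.ascFactorial_succ]
    have e : (x + k + 1).ascFactorial (n + 1) = (x + k + 1) * (x + 1 + k + 1).ascFactorial n := by
      rw [asc_left, show x + k + 1 + 1 = x + 1 + k + 1 by ring]
    have e2 := Nat.ascFactorial_succ (n := x + k + 1) (k := n)
    simp
    rw [← e2, e]
    ring

open Finset in
theorem swap_sum (T : Finset ℕ) (f : ℕ → Finset ℕ → Finset ℕ → ℕ) :
    ∑ A ∈ T.powerset, ∑ i ∈ A, f i (A.erase i) (T \ A) =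
      ∑ i ∈ T, ∑ A ∈ (T.erase i).powerset, f i A (T.erase i \ A) := by
  rw [sum_sigma', sum_sigma']
  refine sum_bij' (fun p _ => ⟨p.2, p.1.erase p.2⟩) (fun p _ => ⟨insert p.1 p.2, p.1⟩) ?_ ?_ ?_ ?_ ?_
  · rintro ⟨A, i⟩ h
    simp only [mem_sigma, mem_powerset] at h ⊢
    exact ⟨h.1 h.2, erase_subset_erase _ h.1⟩
  · rintro ⟨i, A⟩ h
    simp only [mem_sigma, mem_powerset] at h ⊢
    exact ⟨insert_subset h.1 (h.2.trans (erase_subset _ _)), mem_insert_self _ _⟩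
  · rintro ⟨A, i⟩ h
    simp only [mem_sigma, mem_powerset] at h
    simp [insert_erase h.2]
  · rintro ⟨i, A⟩ h
    simp only [mem_sigma, mem_powerset] at h
    have : i ∉ A := fun hi => by simpa using h.2 hi
    simp [erase_insert this]
  · rintro ⟨A, i⟩ h
    simp only [mem_sigma, mem_powerset] at h
    congr 1
    ext j
    simp only [mem_sdiff, mem_erase]
    have := h.2
    grind

open Finset in
theorem hurwitz (c : ℕ → ℕ) (n : ℕ) : ∀ (T : Finset ℕ), T.card = n → ∀ x : ℕ,
    ∑ A ∈ T.powerset, abelF c A x * ((∑ i ∈ T \ A, c i) + 1).ascFactorial (T \ A).card =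
      ((x + ∑ i ∈ T, c i) + 1).ascFactorial T.card := by
  induction n with
  | zero =>
    intro T hT x
    have : T = ∅ := card_eq_zero.mp hT
    subst this
    simp [abelF]
  | succ n ih =>
    intro T hT x
    induction x with
    | zero =>
      rw [sum_eq_single ∅]
      · simp [abelF]
      · intro A _ hA
        have : A.card ≠ 0 := by simpa using hA
        simp [abelF, hA]
      · simp
    | succ x ihx =>
      rw [G_diff, ← ihx]
      simp only [F_diff, add_mul, sum_add_distrib, sum_mul]
      congr 1
      rw [swap_sum T (fun i A B => abelF c A (x + 1 + c i) * ((∑ i ∈ B, c i) + 1).ascFactorial B.card)]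
      refine sum_congr rfl fun i hi => ?_
      exact ih _ (by rw [card_erase_of_mem hi, hT]; rfl) _

open Finset in
theorem key_term (c b : ℕ → ℕ) (a : ℕ) (T A : Finset ℕ) (hA : A ⊆ T) (hb : ∀ i ∈ T, b i = c i + 1) :
    (a + 1 + ∑ i ∈ T, c i).choose ((∑ i ∈ T \ A, b i) - (T \ A).card) *
      ((a + 1) * (a + ∑ i ∈ A, b i).factorial) * (∑ i ∈ T \ A, b i).factorial =
    (a + 1 + ∑ i ∈ T, c i).factorial *
      (abelF c A (a + 1) * ((∑ i ∈ T \ A, c i) + 1).ascFactorial (T \ A).card) := by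
  have h1 : ∑ i ∈ T \ A, b i = ∑ i ∈ T \ A, c i + (T \ A).card := by
    rw [sum_congr rfl (fun i hi => hb i (sdiff_subset hi)), sum_add_distrib]; simp
  have h2 : ∑ i ∈ A, b i = ∑ i ∈ A, c i + A.card := by
    rw [sum_congr rfl (fun i hi => hb i (hA hi)), sum_add_distrib]; simp
  have h3 : ∑ i ∈ T, c i = ∑ i ∈ T \ A, c i + ∑ i ∈ A, c i := (sum_sdiff hA).symm
  rw [h1, h2, h3, Nat.add_sub_cancel, ← Nat.factorial_mul_ascFactorial (∑ i ∈ T \ A, c i)]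
  have h4 : (a + 1) * (a + (∑ i ∈ A, c i + A.card)).factorial =
      (a + 1 + ∑ i ∈ A, c i).factorial * abelF c A (a + 1) := by
    rcases hn : A.card with _ | n
    · have : A = ∅ := card_eq_zero.mp hn
      subst this
      simp [abelF, Nat.factorial_succ]
    · simp only [abelF, hn]
      have := Nat.factorial_mul_ascFactorial (a + 1 + ∑ i ∈ A, c i) n
      simp only [Nat.add_sub_cancel]
      rw [if_neg (by simp), mul_left_comm, this]
      congr 2
      ring
  rw [h4]
  have h5 := Nat.add_choose_mul_factorial_mul_factorial (∑ i ∈ T \ A, c i) (a + 1 + ∑ i ∈ A, c i)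
  have h6 : a + 1 + (∑ i ∈ T \ A, c i + ∑ i ∈ A, c i) =
    ∑ i ∈ T \ A, c i + (a + 1 + ∑ i ∈ A, c i) := by ring
  rw [Nat.choose_symm_add.symm] at h5
  rw [h6, ← h5]
  ring

open Finset in
theorem key_sum (c b : ℕ → ℕ) (a : ℕ) (T : Finset ℕ) (hb : ∀ i ∈ T, b i = c i + 1) :
    ∑ A ∈ T.powerset, (a + 1 + ∑ i ∈ T, c i).choose ((∑ i ∈ T \ A, b i) - (T \ A).card) *
      ((a + 1) * (a + ∑ i ∈ A, b i).factorial) * (∑ i ∈ T \ A, b i).factorial =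
    (a + 1 + ∑ i ∈ T, b i).factorial := by
  rw [sum_congr rfl fun A hA => key_term c b a T A (mem_powerset.mp hA) hb, ← mul_sum,
    hurwitz c _ T rfl, Nat.factorial_mul_ascFactorial]
  congr 1
  rw [sum_congr rfl hb, sum_add_distrib]
  simp [add_assoc]


/-- **Identity on multinomial coefficients (Theorem `thm:identity`).**
For `r ≥ 1` and positive integers `m 1, …, m r` with `s = m 1 + ⋯ + m r`,
setting `g 1 = m 1 - 1` and `g i = m i` for `2 ≤ i`, the multinomial coefficient
`s! / (m 1 ! ⋯ m r !)` equals the sum over all ordered bipartitions `(B₁, B₂)` of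
`{1, …, r}` with `1 ∈ B₁` and `B₂ = {1,…,r} \ B₁` of
`choose (s - r + 1) (S(B₂) - |B₂|) * C(B₁) * C(B₂)`, where `S(B) = ∑_{i∈B} g i`
and `C(B) = S(B)! / ∏_{i∈B} (g i)!`. -/
theorem multinomial_identity_one
    (r : ℕ) (hr : 1 ≤ r) (m : ℕ → ℕ) (hm : ∀ i ∈ Finset.Icc 1 r, 0 < m i)
    (s : ℕ) (hs : s = ∑ i ∈ Finset.Icc 1 r, m i)
    (g : ℕ → ℕ) (hg1 : g 1 = m 1 - 1) (hg2 : ∀ i, 2 ≤ i → g i = m i) :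
    s.factorial / ∏ i ∈ Finset.Icc 1 r, (m i).factorial =
      ∑ B1 ∈ (Finset.Icc 1 r).powerset.filter (fun B => 1 ∈ B),
        (s - r + 1).choose
            ((∑ i ∈ Finset.Icc 1 r \ B1, g i) - (Finset.Icc 1 r \ B1).card) *
          ((∑ i ∈ B1, g i).factorial / ∏ i ∈ B1, (g i).factorial) *
          ((∑ i ∈ Finset.Icc 1 r \ B1, g i).factorial /
            ∏ i ∈ Finset.Icc 1 r \ B1, (g i).factorial) := by
  have hI : Finset.Icc 1 r = insert 1 (Finset.Icc 2 r) := by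
    ext j; simp only [Finset.mem_Icc, Finset.mem_insert]; omega
  have h1T : (1 : ℕ) ∉ Finset.Icc 2 r := by simp
  have hcard : (Finset.Icc 2 r).card = r - 1 := by simp
  have hgT : ∀ i ∈ Finset.Icc 2 r, g i = m i := fun i hi => hg2 i (Finset.mem_Icc.mp hi).1
  have hmT : ∀ i ∈ Finset.Icc 2 r, 0 < m i := fun i hi => hm i (by rw [hI]; simp [hi])
  have hm1 : 0 < m 1 := hm 1 (by simp [hr])
  rw [hI] at hs ⊢
  clear hm
  generalize Finset.Icc 2 r = T at *
  have hm1' : m 1 = g 1 + 1 := by omega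
  rw [Finset.sum_insert h1T, ← Finset.sum_congr rfl hgT, hm1'] at hs
  have hb : ∀ i ∈ T, g i = (g i - 1) + 1 := fun i hi => by
    have := hmT i hi; rw [← hgT i hi] at this; omega
  have hN : s - r + 1 = g 1 + 1 + ∑ i ∈ T, (g i - 1) := by
    have : ∑ i ∈ T, g i = ∑ i ∈ T, (g i - 1) + T.card := by
      rw [Finset.sum_congr rfl hb, Finset.sum_add_distrib]; simp
    have hs' : s = g 1 + 1 + ∑ i ∈ T, g i := hs
    omega
  have key := key_sum (fun i => g i - 1) g (g 1) T hb
  rw [← hN, ← hs] at key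
  have hre : ∀ f : Finset ℕ → Finset ℕ → ℕ,
      ∑ B1 ∈ (insert 1 T).powerset.filter (fun B => 1 ∈ B), f B1 (insert 1 T \ B1) =
      ∑ A ∈ T.powerset, f (insert 1 A) (T \ A) := by
    intro f
    refine Finset.sum_bij' (fun B _ => B.erase 1) (fun A _ => insert 1 A) ?_ ?_ ?_ ?_ ?_
    · intro B hB
      simp only [Finset.mem_filter, Finset.mem_powerset] at hB ⊢
      exact Finset.subset_insert_iff.mp hB.1
    · intro A hA
      simp only [Finset.mem_filter, Finset.mem_powerset] at hA ⊢
      exact ⟨Finset.insert_subset_insert _ hA, Finset.mem_insert_self _ _⟩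
    · intro B hB
      simp only [Finset.mem_filter] at hB
      exact Finset.insert_erase hB.2
    · intro A hA
      exact Finset.erase_insert fun h => h1T (Finset.mem_powerset.mp hA h)
    · intro B hB
      simp only [Finset.mem_filter] at hB
      rw [Finset.insert_erase hB.2]
      congr 1
      ext j
      simp only [Finset.mem_sdiff, Finset.mem_insert, Finset.mem_erase]
      have := hB.2
      grind
  rw [hre (fun B1 B2 => (s - r + 1).choose ((∑ i ∈ B2, g i) - B2.card) *
          ((∑ i ∈ B1, g i).factorial / ∏ i ∈ B1, (g i).factorial) *
          ((∑ i ∈ B2, g i).factorial / ∏ i ∈ B2, (g i).factorial))]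
  apply Nat.div_eq_of_eq_mul_right (Finset.prod_pos fun i _ => Nat.factorial_pos _)
  rw [← key, Finset.mul_sum]
  refine Finset.sum_congr rfl fun A hA => ?_
  have hA' := Finset.mem_powerset.mp hA
  have h1A : (1 : ℕ) ∉ A := fun h => h1T (hA' h)
  have d1 := Nat.div_mul_cancel (Nat.prod_factorial_dvd_factorial_sum (insert 1 A) g)
  have d2 := Nat.div_mul_cancel (Nat.prod_factorial_dvd_factorial_sum (T \ A) g)
  have hp : ∏ i ∈ insert 1 T, (m i).factorial =
      (g 1 + 1) * (∏ i ∈ insert 1 A, (g i).factorial) * ∏ i ∈ T \ A, (g i).factorial := by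
    rw [Finset.prod_insert h1T, Finset.prod_insert h1A, hm1', Nat.factorial_succ,
      Finset.prod_congr rfl (fun i hi => by rw [← hgT i hi]), ← Finset.prod_sdiff hA']
    ring
  rw [hp, ← Finset.sum_insert h1A]
  generalize (∑ i ∈ insert 1 A, g i).factorial / _ = u at d1 ⊢
  generalize (∑ i ∈ T \ A, g i).factorial / _ = v at d2 ⊢
  rw [← d1, ← d2]
  ring
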